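/- For every integer d ≥ 3, the second boundary coefficient of Theorem 1 decomposes according to the genus-2 test surface of Theorem 2: B₂(d) = 3·N₁(d) + 80·e(d, 2d−5) + 160·a(d−1, 2d−5) + 640·a(d, 2d−5). -/

import Mathlib

/-- The factorial of an integer `n`, interpreted as `0! = 1` extended by `n! = (n.toNat)!`
(only ever applied to nonnegative integers). -/
noncomputable def zfact (n : ℤ) : ℚ := (Nat.factorial n.toNat : ℚ)

/-- `1/n!` for an integer `n`, with the convention `1/n! = 0` whenever `n < 0`. -/
noncomputable def invfact (n : ℤ) : ℚ :=
  if 0 ≤ n then (Nat.factorial n.toNat : ℚ)⁻¹ else 0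

/-- The binomial coefficient `binom(n, k)` for integers, equal to `0` when `k > n` or `k < 0`. -/
noncomputable def zbinom (n k : ℤ) : ℚ :=
  if 0 ≤ k ∧ k ≤ n then (Nat.choose n.toNat k.toNat : ℚ) else 0

/-- `a(d, g) = (2d−g−1)·g!/(d!·(g−d+1)!)` from Proposition 2.1. -/
noncomputable def aCount (d g : ℤ) : ℚ :=
  ((2 * d - g - 1 : ℤ) : ℚ) * zfact g * invfact d * invfact (g - d + 1)

/-- `b(d, g) = (2d−g−1)·(2d−g)·(2d−g+1)·g!/(d!·(g−d)!)` from Proposition 2.1. -/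
noncomputable def bCount (d g : ℤ) : ℚ :=
  ((2 * d - g - 1 : ℤ) : ℚ) * ((2 * d - g : ℤ) : ℚ) * ((2 * d - g + 1 : ℤ) : ℚ) *
    zfact g * invfact d * invfact (g - d)

/-- `c(d, g, γ) = (γ²·(2d−g) − γ)·binom(g, d)` from Proposition 2.1. -/
noncomputable def cCount (d g γ : ℤ) : ℚ :=
  (((γ : ℚ) ^ 2 * ((2 * d - g : ℤ) : ℚ) - (γ : ℚ))) * zbinom g d

/-- `e(d, g) = 8·g!/((d−3)!·(g−d+2)!) − 8·g!/(d!·(g−d−1)!)` from Proposition 2.1. -/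
noncomputable def eCount (d g : ℤ) : ℚ :=
  8 * zfact g * invfact (d - 3) * invfact (g - d + 2) -
    8 * zfact g * invfact d * invfact (g - d - 1)

/-- `N(d)`, the number of pencils of degree `d` with two unspecified triple ramification
points on a general curve of genus `2d−4` (Proposition 2.2 (2)). -/
noncomputable def Ncount (d : ℤ) : ℚ :=
  48 * (6 * (d : ℚ) ^ 2 - 28 * (d : ℚ) + 35) * zfact (2 * d - 4) * invfact d * invfact (d - 3)

/-- `N₁(d)` from Proposition 2.2 (3). -/
noncomputable def N1count (d : ℤ) : ℚ :=
  24 * (12 * (d : ℚ) ^ 3 - 92 * (d : ℚ) ^ 2 + 240 * (d : ℚ) - 215) *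
    zfact (2 * d - 4) * invfact d * invfact (d - 2)

/-- `N₂(d)` from Theorem 5.4. -/
noncomputable def N2count (d : ℤ) : ℚ :=
  6 * (40 * (d : ℚ) ^ 2 - 179 * (d : ℚ) + 212) * zfact (2 * d - 4) * invfact d * invfact (d - 3)

/-- `N₃(d)` from Theorem 5.6. -/
noncomputable def N3count (d : ℤ) : ℚ :=
  84 * ((d : ℚ) - 3) * (2 * (d : ℚ) ^ 2 - 10 * (d : ℚ) + 13) *
    zfact (2 * d - 4) * invfact d * invfact (d - 2)

/-- The overall constant `K(d) = 2·(2d−6)!/(d!·(d−3)!)` of Theorem 1. -/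
noncomputable def Kconst (d : ℤ) : ℚ := 2 * zfact (2 * d - 6) * invfact d * invfact (d - 3)

/-- The `λ`-coefficient `A(d) = K(d)·24·(36d⁴−36d³−640d²+1885d−1475)` of Theorem 1. -/
noncomputable def Acoeff (d : ℤ) : ℚ :=
  Kconst d * (24 * (36 * (d : ℚ) ^ 4 - 36 * (d : ℚ) ^ 3 - 640 * (d : ℚ) ^ 2 +
    1885 * (d : ℚ) - 1475))

/-- The `δ₀`-coefficient `B₀(d) = K(d)·(144d⁴−528d³−298d²+3049d−2940)` of Theorem 1. -/
noncomputable def B0coeff (d : ℤ) : ℚ :=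
  Kconst d * (144 * (d : ℚ) ^ 4 - 528 * (d : ℚ) ^ 3 - 298 * (d : ℚ) ^ 2 +
    3049 * (d : ℚ) - 2940)

/-- The `δᵢ`-coefficient `Bᵢ(d) = K(d)·12·i·(2d−3−i)·(36d³−156d²+180d−5)`, `i ≥ 1`,
of Theorem 1. -/
noncomputable def Bcoeff (d i : ℤ) : ℚ :=
  Kconst d * (12 * (i : ℚ) * (2 * (d : ℚ) - 3 - (i : ℚ)) *
    (36 * (d : ℚ) ^ 3 - 156 * (d : ℚ) ^ 2 + 180 * (d : ℚ) - 5))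

/-!
Every term of the identity is a polynomial multiple of `(2d−5)·K(d)`: the recursion `n! = n·(n−1)!`
reduces the factorials `(2d−4)!` and `(2d−5)!` to `(2d−6)!`, and the recursion
`1/(n−1)! = n·(1/n!)`, valid for all integers `n`, reduces the remaining ones to
`1/d!` and `1/(d−3)!`. The theorem is then an identity between cubic polynomials in `d`.
-/

theorem zfact_eq_mul_zfact_sub_one {n : ℤ} (hn : 0 < n) : zfact n = n * zfact (n - 1) := by
  have toNat_ne_zero : n.toNat ≠ 0 := by omega
  have cast_toNat : ((n.toNat : ℕ) : ℚ) = n := by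
    exact_mod_cast Int.toNat_of_nonneg hn.le
  rw [zfact, zfact, Int.pred_toNat, ← Nat.mul_factorial_pred toNat_ne_zero, Nat.cast_mul,
    cast_toNat]

theorem invfact_of_nonneg {n : ℤ} (hn : 0 ≤ n) : invfact n = (zfact n)⁻¹ :=
  if_pos hn

theorem invfact_of_neg {n : ℤ} (hn : n < 0) : invfact n = 0 :=
  if_neg hn.not_ge

-- At `n = 0` the right side vanishes, which forces the convention `1/(−1)! = 0`.
theorem invfact_sub_one (n : ℤ) : invfact (n - 1) = n * invfact n := by
  rcases lt_trichotomy n 0 with hneg | rfl | hpos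
  · rw [invfact_of_neg hneg, invfact_of_neg (by omega), mul_zero]
  · rw [invfact_of_neg (by omega), Int.cast_zero, zero_mul]
  · have cast_ne_zero : (n : ℚ) ≠ 0 := by exact_mod_cast hpos.ne'
    rw [invfact_of_nonneg (by omega : 0 ≤ n - 1), invfact_of_nonneg hpos.le,
      zfact_eq_mul_zfact_sub_one hpos, mul_inv, mul_inv_cancel_left₀ cast_ne_zero]

theorem invfact_sub_three (n : ℤ) :
    invfact (n - 3) = n * (n - 1) * (n - 2) * invfact n := by
  rw [show n - 3 = n - 1 - 1 - 1 by ring, invfact_sub_one, invfact_sub_one, invfact_sub_one]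
  push_cast
  ring

theorem Bcoeff_two (d : ℤ) :
    Bcoeff d 2 = 24 * (36 * d ^ 3 - 156 * d ^ 2 + 180 * d - 5) * ((2 * d - 5) * Kconst d) := by
  rw [Bcoeff]
  push_cast
  ring

theorem zfact_two_mul_sub_five {d : ℤ} (hd : 3 ≤ d) :
    zfact (2 * d - 5) = (2 * d - 5) * zfact (2 * d - 6) := by
  rw [zfact_eq_mul_zfact_sub_one (by omega), show 2 * d - 5 - 1 = 2 * d - 6 by ring]
  push_cast
  rfl

theorem zfact_two_mul_sub_four {d : ℤ} (hd : 3 ≤ d) :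
    zfact (2 * d - 4) = (2 * d - 4) * (2 * d - 5) * zfact (2 * d - 6) := by
  rw [zfact_eq_mul_zfact_sub_one (by omega), show 2 * d - 4 - 1 = 2 * d - 5 by ring,
    zfact_two_mul_sub_five hd]
  push_cast
  ring

theorem N1count_eq_mul_Kconst {d : ℤ} (hd : 3 ≤ d) :
    N1count d =
      24 * (12 * d ^ 3 - 92 * d ^ 2 + 240 * d - 215) * ((2 * d - 5) * Kconst d) := by
  have invfact_d_sub_three : invfact (d - 3) = (d - 2) * invfact (d - 2) := by
    rw [show d - 3 = d - 2 - 1 by ring, invfact_sub_one]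
    push_cast
    rfl
  rw [N1count, Kconst, zfact_two_mul_sub_four hd, invfact_d_sub_three]
  ring

theorem eCount_two_mul_sub_five {d : ℤ} (hd : 3 ≤ d) :
    eCount d (2 * d - 5) = 12 * (3 * d ^ 2 - 15 * d + 20) * ((2 * d - 5) * Kconst d) := by
  -- The two terms of `e(d, 2d−5)` lack `1/d!` and `1/(d−3)!` respectively; each is supplied by
  -- a shift by three.
  have first_term : invfact (d - 3) * invfact (d - 3) =
      d * (d - 1) * (d - 2) * (invfact d * invfact (d - 3)) := by
    nth_rw 1 [invfact_sub_three]
    ring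
  have second_term : invfact d * invfact (d - 6) =
      (d - 3) * (d - 4) * (d - 5) * (invfact d * invfact (d - 3)) := by
    rw [show d - 6 = d - 3 - 3 by ring, invfact_sub_three (d - 3)]
    push_cast
    ring
  rw [eCount, Kconst, show 2 * d - 5 - d + 2 = d - 3 by ring,
    show 2 * d - 5 - d - 1 = d - 6 by ring, zfact_two_mul_sub_five hd]
  linear_combination 8 * (2 * d - 5) * zfact (2 * d - 6) * (first_term - second_term)

theorem aCount_sub_one_two_mul_sub_five {d : ℤ} (hd : 3 ≤ d) :
    aCount (d - 1) (2 * d - 5) = d * ((2 * d - 5) * Kconst d) := by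
  rw [aCount, Kconst, show 2 * d - 5 - (d - 1) + 1 = d - 3 by ring, invfact_sub_one,
    zfact_two_mul_sub_five hd]
  push_cast
  ring

theorem aCount_two_mul_sub_five {d : ℤ} (hd : 3 ≤ d) :
    aCount d (2 * d - 5) = 2 * (d - 3) * ((2 * d - 5) * Kconst d) := by
  rw [aCount, Kconst, show 2 * d - 5 - d + 1 = d - 3 - 1 by ring, invfact_sub_one,
    zfact_two_mul_sub_five hd]
  push_cast
  ring

/-- the decomposition of the second boundary coefficient of Theorem 1 according
to the genus-2 test surface of Theorem 2 (proof of Theorem 3.3), for every integer `d ≥ 3`: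
`B₂(d) = 3·N₁(d) + 80·e(d, 2d−5) + 160·a(d−1, 2d−5) + 640·a(d, 2d−5)`. -/
theorem genus_two_decomposition (d : ℤ) (hd : 3 ≤ d) :
    Bcoeff d 2 = 3 * N1count d + 80 * eCount d (2 * d - 5) + 160 * aCount (d - 1) (2 * d - 5) +
      640 * aCount d (2 * d - 5) := by
  rw [Bcoeff_two, N1count_eq_mul_Kconst hd, eCount_two_mul_sub_five hd,
    aCount_sub_one_two_mul_sub_five hd, aCount_two_mul_sub_five hd]
  ring
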